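/- For every ε > 0 there exists an instance (G,w) of the concurrent graph sharing game, with G a cycle, such that v(G,w) ≤ 1/3 + ε. -/

import Mathlib

/-!
Formalization of the concurrent graph sharing game.

An instance is a finite connected simple graph `G` on a finite vertex type `V`
together with vertex weights `w : V → (0,1]` summing to `1`, such that no two
distinct subsets of vertices have the same total weight.

A game history is recorded as a list of the taken vertices, **most recent
first**.  The player-to-move at a history is determined by the history itself:
the first player (1st) moves when his collected weight so far is at most that
of the second player (2nd); by the distinct-subset-sums assumption a tie occurs
only at the empty history, where indeed 1st begins.  `scores w h` computes the
pair `(w(F), w(S))` of total weights collected by 1st and 2nd along a history.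

A strategy is a function from histories to the chosen next vertex; it is legal
if, whenever some legal move exists (a non-taken vertex that is adjacent to a
taken one, or any vertex at the very beginning), it produces a legal move.
`firstScore w σ τ` is the total weight collected by 1st after the complete play
(all `Fintype.card V` vertices taken) in which 1st uses `σ` and 2nd uses `τ`.

`FirstGuarantees G w c` says that 1st has a legal strategy guaranteeing that he
collects total weight at least `c` against every legal strategy of 2nd, and the
value `gameValue G w` is the supremum of all such guarantees `c`.
-/

namespace ConcurrentSharing

variable {V : Type} [Fintype V]

/-- The pair `(w(F), w(S))` of weights collected by the two players along a
history (most recent vertex first): each vertex is assigned to the player who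
was to move, namely 1st iff his score so far is at most 2nd's score. -/
noncomputable def scores (w : V → ℝ) : List V → ℝ × ℝ
  | [] => (0, 0)
  | v :: h =>
    let p := scores w h
    if p.1 ≤ p.2 then (p.1 + w v, p.2) else (p.1, p.2 + w v)

/-- `v` is a legal next move at history `h`: it is not yet taken, and it is
adjacent to some taken vertex (any vertex is legal at the start). -/
def LegalMove (G : SimpleGraph V) (h : List V) (v : V) : Prop :=
  v ∉ h ∧ (h = [] ∨ ∃ u ∈ h, G.Adj u v)

/-- A strategy (for either player) maps histories to vertices; it is legal if
it produces a legal move whenever a legal move exists. -/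
def LegalStrategy (G : SimpleGraph V) (σ : List V → V) : Prop :=
  ∀ h : List V, (∃ v, LegalMove G h v) → LegalMove G h (σ h)

/-- The history after `n` rounds when 1st plays `σ` and 2nd plays `τ`
(the player to move is the one whose collected weight so far is smaller;
at the start, i.e. on a tie, 1st moves). -/
noncomputable def playAux (w : V → ℝ) (σ τ : List V → V) : ℕ → List V
  | 0 => []
  | n + 1 =>
    let h := playAux w σ τ n
    (if (scores w h).1 ≤ (scores w h).2 then σ h else τ h) :: h

/-- The total weight `w(F)` collected by 1st at the end of the complete play
(all vertices taken) in which 1st plays `σ` and 2nd plays `τ`. -/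
noncomputable def firstScore (w : V → ℝ) (σ τ : List V → V) : ℝ :=
  (scores w (playAux w σ τ (Fintype.card V))).1

/-- 1st has a legal strategy collecting total weight at least `c` against
every legal strategy of 2nd. -/
def FirstGuarantees (G : SimpleGraph V) (w : V → ℝ) (c : ℝ) : Prop :=
  ∃ σ : List V → V, LegalStrategy G σ ∧
    ∀ τ : List V → V, LegalStrategy G τ → c ≤ firstScore w σ τ

/-- The value `v(G,w)`: the maximum total weight 1st can guarantee. -/
noncomputable def gameValue (G : SimpleGraph V) (w : V → ℝ) : ℝ :=
  sSup {c : ℝ | FirstGuarantees G w c}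

/-- `(G, w)` is an instance of the concurrent graph sharing game: `G` is
connected, the weights lie in `(0,1]` and sum to `1`, and no two distinct
subsets of vertices have the same total weight. -/
def IsGameInstance (G : SimpleGraph V) (w : V → ℝ) : Prop :=
  G.Connected ∧ (∀ v : V, 0 < w v ∧ w v ≤ 1) ∧ (∑ v : V, w v) = 1 ∧
    ∀ A B : Finset V, A ≠ B → ∑ a ∈ A, w a ≠ ∑ b ∈ B, w b

end ConcurrentSharing


namespace ConcurrentSharing

section general

variable {V : Type} [Fintype V]

/-- From history `h` with `k` moves left, 2nd can keep the final score of 1st at most `c`. -/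
def SecondWins (G : SimpleGraph V) (w : V → ℝ) (c : ℝ) : ℕ → List V → Prop
  | 0, h => (scores w h).1 ≤ c
  | k + 1, h =>
    ((scores w h).1 ≤ (scores w h).2 ∧ (∃ v, LegalMove G h v) ∧
      ∀ v, LegalMove G h v → SecondWins G w c k (v :: h)) ∨
    (¬ (scores w h).1 ≤ (scores w h).2 ∧
      ∃ v, LegalMove G h v ∧ SecondWins G w c k (v :: h))

open Classical in
/-- The strategy of 2nd following the winning moves. -/
noncomputable def followWin [Nonempty V] (G : SimpleGraph V) (w : V → ℝ) (c : ℝ)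
    (h : List V) : V :=
  if hw : ∃ v, LegalMove G h v ∧ SecondWins G w c (Fintype.card V - (h.length + 1)) (v :: h) then
    hw.choose
  else if hl : ∃ v, LegalMove G h v then hl.choose
  else Classical.arbitrary V

theorem followWin_legal [Nonempty V] (G : SimpleGraph V) (w : V → ℝ) (c : ℝ) :
    LegalStrategy G (followWin G w c) := by
  intro h hl
  unfold followWin
  split_ifs with hw
  · exact hw.choose_spec.1
  · exact hl.choose_spec

theorem playAux_length (w : V → ℝ) (σ τ : List V → V) (n : ℕ) :
    (playAux w σ τ n).length = n := by
  induction n with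
  | zero => rfl
  | succ n ih => simp [playAux, ih]

theorem playAux_wins [Nonempty V] (G : SimpleGraph V) (w : V → ℝ) (c : ℝ)
    (hwin : SecondWins G w c (Fintype.card V) []) (σ : List V → V) (hσ : LegalStrategy G σ)
    (n : ℕ) (hn : n ≤ Fintype.card V) :
    SecondWins G w c (Fintype.card V - n) (playAux w σ (followWin G w c) n) := by
  induction n with
  | zero => simpa [playAux] using hwin
  | succ n ih =>
    have ih := ih (by omega)
    have hlen := playAux_length w σ (followWin G w c) n
    have hk : Fintype.card V - n = (Fintype.card V - (n + 1)) + 1 := by omega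
    rw [hk] at ih
    simp only [playAux]
    generalize playAux w σ (followWin G w c) n = h at *
    rcases ih with ⟨hle, hex, hall⟩ | ⟨hle, hex⟩
    · rw [if_pos hle]
      exact hall _ (hσ h hex)
    · rw [if_neg hle]
      rw [← hlen] at hex ⊢
      unfold followWin
      rw [dif_pos hex]
      exact hex.choose_spec.2

theorem gameValue_le_of_secondWins [Nonempty V] (G : SimpleGraph V) (w : V → ℝ) (c : ℝ)
    (hc : 0 ≤ c) (hwin : SecondWins G w c (Fintype.card V) []) : gameValue G w ≤ c := by
  apply Real.sSup_le _ hc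
  rintro x ⟨σ, hσ, hx⟩
  refine (hx _ (followWin_legal G w c)).trans ?_
  have := playAux_wins G w c hwin σ hσ _ le_rfl
  rw [Nat.sub_self] at this
  exact this

end general

/-- Indicator of the three heavy vertices. -/
def hv : Fin 7 → ℕ := ![0, 1, 1, 0, 1, 0, 0]

/-- Small parts of the weights; they sum to `181`. -/
def sm : Fin 7 → ℕ := ![30, 34, 5, 32, 44, 21, 15]

/-- The weights of the instance with parameter `M`. -/
noncomputable def wt (M : ℕ) (v : Fin 7) : ℝ :=
  ((M * hv v + sm v : ℕ) : ℝ) / ((3 * M + 181 : ℕ) : ℝ)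

/-- Boolean test for legal moves on the cycle of length 7. -/
def legalB (h : List (Fin 7)) (v : Fin 7) : Bool :=
  !(h.contains v) && (h.isEmpty || h.any (fun u => u == v + 1 || v == u + 1))

theorem legalB_iff (h : List (Fin 7)) (v : Fin 7) :
    legalB h v = true ↔ LegalMove (SimpleGraph.cycleGraph 7) h v := by
  have hadj : ∀ u v : Fin 7, (SimpleGraph.cycleGraph 7).Adj u v ↔ (u = v + 1 ∨ v = u + 1) := by
    intro u v
    rw [SimpleGraph.cycleGraph_adj, sub_eq_iff_eq_add, sub_eq_iff_eq_add, add_comm 1, add_comm 1]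
  simp [legalB, LegalMove, hadj]

/-- Boolean solver: `(a, b)` and `(c, d)` are the numbers of heavy vertices and the sums of small
parts of 1st and 2nd. -/
def winB : ℕ → List (Fin 7) → ℕ → ℕ → ℕ → ℕ → Bool
  | 0, _, a, b, _, d => decide (b + d ≤ 181) && decide (a ≤ 1)
  | k + 1, h, a, b, c, d =>
    decide (b + d ≤ 181) &&
    (if a < c ∨ (a = c ∧ b ≤ d) then
      (List.finRange 7).any (fun v => legalB h v) &&
      (List.finRange 7).all (fun v => !(legalB h v) || winB k (v :: h) (a + hv v) (b + sm v) c d)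
    else
      (List.finRange 7).any (fun v => legalB h v && winB k (v :: h) a b (c + hv v) (d + sm v)))

theorem le_iff_lex (M a b c d : ℕ) (hM : 181 < M) (hbd : b + d ≤ 181) :
    M * a + b ≤ M * c + d ↔ (a < c ∨ (a = c ∧ b ≤ d)) := by
  constructor
  · intro h
    rcases lt_trichotomy a c with h1 | h1 | h1
    · exact Or.inl h1
    · subst h1; right; exact ⟨rfl, by omega⟩
    · nlinarith
  · rintro (h | ⟨rfl, h⟩)
    · nlinarith
    · omega

theorem winB_sound (M : ℕ) (hM : 181 < M) (k : ℕ) : ∀ (h : List (Fin 7)) (a b c d : ℕ),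
    winB k h a b c d = true →
    scores (wt M) h = (((M * a + b : ℕ) : ℝ) / ((3 * M + 181 : ℕ) : ℝ),
      ((M * c + d : ℕ) : ℝ) / ((3 * M + 181 : ℕ) : ℝ)) →
    SecondWins (SimpleGraph.cycleGraph 7) (wt M)
      (((M + 181 : ℕ) : ℝ) / ((3 * M + 181 : ℕ) : ℝ)) k h := by
  have hT : (0 : ℝ) < ((3 * M + 181 : ℕ) : ℝ) := by exact_mod_cast (by omega)
  induction k with
  | zero =>
    intro h a b c d hw hs
    simp only [winB, Bool.and_eq_true, decide_eq_true_eq] at hw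
    simp only [SecondWins, hs]
    apply div_le_div_of_nonneg_right _ hT.le
    have : M * a + b ≤ M + 181 := by nlinarith [hw.1, hw.2]
    exact_mod_cast this
  | succ k ih =>
    intro h a b c d hw hs
    have hle : b + d ≤ 181 → ((scores (wt M) h).1 ≤ (scores (wt M) h).2 ↔
        (a < c ∨ (a = c ∧ b ≤ d))) := by
      intro hbd
      rw [hs, ← le_iff_lex M a b c d hM hbd]
      simp only
      rw [div_le_div_iff_of_pos_right hT, Nat.cast_le]
    rw [winB, Bool.and_eq_true, decide_eq_true_eq] at hw
    obtain ⟨hbd, hw⟩ := hw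
    have hle := hle hbd
    unfold SecondWins
    split_ifs at hw with hcmp
    · left
      simp only [Bool.and_eq_true, List.any_eq_true, List.all_eq_true, Bool.or_eq_true,
        List.mem_finRange, true_and, forall_const] at hw
      refine ⟨hle.2 hcmp, ?_, ?_⟩
      · obtain ⟨v, hv⟩ := hw.1
        exact ⟨v, (legalB_iff h v).1 hv⟩
      · intro v hl
        have hl' := (legalB_iff h v).2 hl
        have := hw.2 v
        rw [hl'] at this
        refine ih _ _ _ _ _ (this.resolve_left (by simp)) ?_
        have hc := hle.2 hcmp
        simp only [scores]
        rw [if_pos hc, hs]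
        simp only [wt, Prod.mk.injEq, and_true]
        rw [← add_div, ← Nat.cast_add]
        congr 2
        ring
    · right
      simp only [Bool.and_eq_true, List.any_eq_true,
        List.mem_finRange, true_and] at hw
      obtain ⟨v, hl, hw⟩ := hw
      have hc : ¬ (scores (wt M) h).1 ≤ (scores (wt M) h).2 := fun hc => hcmp (hle.1 hc)
      refine ⟨hc, v, (legalB_iff h v).1 hl, ih _ _ _ _ _ hw ?_⟩
      simp only [scores]
      rw [if_neg hc, hs]
      simp only [wt, Prod.mk.injEq, true_and]
      rw [← add_div, ← Nat.cast_add]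
      congr 2
      ring

theorem winB_start : winB 7 [] 0 0 0 0 = true := by decide +kernel

/-- Code of a subset given by its membership bits. -/
def code (f : Fin 7 → ℕ) (a0 a1 a2 a3 a4 a5 a6 : Bool) : ℕ :=
  (bif a0 then f 0 else 0) + (bif a1 then f 1 else 0) + (bif a2 then f 2 else 0) +
  (bif a3 then f 3 else 0) + (bif a4 then f 4 else 0) + (bif a5 then f 5 else 0) +
  (bif a6 then f 6 else 0)

set_option synthInstance.maxHeartbeats 400000 in
set_option synthInstance.maxSize 4096 in
theorem code_inj : ∀ a0 a1 a2 a3 a4 a5 a6 b0 b1 b2 b3 b4 b5 b6 : Bool,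
    code hv a0 a1 a2 a3 a4 a5 a6 = code hv b0 b1 b2 b3 b4 b5 b6 →
    code sm a0 a1 a2 a3 a4 a5 a6 = code sm b0 b1 b2 b3 b4 b5 b6 →
    (a0 = b0 ∧ a1 = b1 ∧ a2 = b2 ∧ a3 = b3 ∧ a4 = b4 ∧ a5 = b5 ∧ a6 = b6) := by
  decide +kernel

theorem sum_eq_code (f : Fin 7 → ℕ) (A : Finset (Fin 7)) :
    ∑ i ∈ A, f i = code f (decide (0 ∈ A)) (decide (1 ∈ A)) (decide (2 ∈ A)) (decide (3 ∈ A))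
      (decide (4 ∈ A)) (decide (5 ∈ A)) (decide (6 ∈ A)) := by
  have : ∑ i ∈ A, f i = ∑ i, if i ∈ A then f i else 0 := by simp
  rw [this, Fin.sum_univ_seven]
  simp [code, Bool.cond_decide]

theorem set_inj (A B : Finset (Fin 7)) (h1 : ∑ i ∈ A, hv i = ∑ i ∈ B, hv i)
    (h2 : ∑ i ∈ A, sm i = ∑ i ∈ B, sm i) : A = B := by
  rw [sum_eq_code, sum_eq_code] at h1 h2
  have := code_inj _ _ _ _ _ _ _ _ _ _ _ _ _ _ h1 h2
  simp only [decide_eq_decide] at this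
  ext i
  fin_cases i <;> simp_all

theorem sum_wt (M : ℕ) (A : Finset (Fin 7)) :
    ∑ i ∈ A, wt M i = ((M * (∑ i ∈ A, hv i) + ∑ i ∈ A, sm i : ℕ) : ℝ) /
      ((3 * M + 181 : ℕ) : ℝ) := by
  simp only [wt]
  rw [← Finset.sum_div, ← Nat.cast_sum, Finset.sum_add_distrib, Finset.mul_sum]

theorem sum_sm_le (A : Finset (Fin 7)) : ∑ i ∈ A, sm i ≤ 181 := by
  calc ∑ i ∈ A, sm i ≤ ∑ i, sm i := Finset.sum_le_sum_of_subset (Finset.subset_univ A)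
    _ = 181 := by decide

theorem wt_instance (M : ℕ) (hM : 181 < M) :
    IsGameInstance (SimpleGraph.cycleGraph 7) (wt M) := by
  have hT : (0 : ℝ) < ((3 * M + 181 : ℕ) : ℝ) := by exact_mod_cast (by omega)
  refine ⟨SimpleGraph.cycleGraph_connected, ?_, ?_, ?_⟩
  · intro v
    have h1 : 0 < sm v ∧ sm v ≤ 181 ∧ hv v ≤ 1 := by revert v; decide
    constructor
    · apply div_pos _ hT
      exact_mod_cast (by omega)
    · rw [wt, div_le_one hT, Nat.cast_le]
      nlinarith [h1.2.1, h1.2.2]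
  · rw [sum_wt]
    have h1 : ∑ i, hv i = 3 := by decide
    have h2 : ∑ i, sm i = 181 := by decide
    rw [h1, h2, mul_comm M 3]
    exact div_self hT.ne'
  · intro A B hAB h
    apply hAB
    rw [sum_wt, sum_wt, div_left_inj' hT.ne', Nat.cast_inj] at h
    have ha := sum_sm_le A
    have hb := sum_sm_le B
    have h1 : ∑ i ∈ A, hv i = ∑ i ∈ B, hv i := by
      rcases lt_trichotomy (∑ i ∈ A, hv i) (∑ i ∈ B, hv i) with h1 | h1 | h1
      · have := Nat.mul_le_mul_left M (Nat.succ_le_of_lt h1)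
        rw [Nat.mul_succ] at this
        omega
      · exact h1
      · have := Nat.mul_le_mul_left M (Nat.succ_le_of_lt h1)
        rw [Nat.mul_succ] at this
        omega
    rw [h1] at h
    exact set_inj A B h1 (by omega)

end ConcurrentSharing

open ConcurrentSharing in
/-- For every `ε > 0` there exists an instance `(G,w)` of the
concurrent graph sharing game with `G` a cycle such that `v(G,w) ≤ 1/3 + ε`. -/
theorem exists_cycle_instance_value_le (ε : ℝ) (hε : 0 < ε) :
    ∃ (n : ℕ) (w : Fin n → ℝ), 3 ≤ n ∧
      IsGameInstance (SimpleGraph.cycleGraph n) w ∧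
      gameValue (SimpleGraph.cycleGraph n) w ≤ 1 / 3 + ε := by
  obtain ⟨M, hM⟩ := exists_nat_gt (max 181 (181 / ε))
  have hM1 : (181 : ℝ) < M := (le_max_left _ _).trans_lt hM
  have hM2 : 181 / ε < (M : ℝ) := (le_max_right _ _).trans_lt hM
  have hM' : 181 < M := by exact_mod_cast hM1
  rw [div_lt_iff₀ hε] at hM2
  refine ⟨7, wt M, by norm_num, wt_instance M hM', ?_⟩
  have hwin := winB_sound M hM' 7 [] 0 0 0 0 winB_start (by simp [scores])
  refine (gameValue_le_of_secondWins _ _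
    (((M + 181 : ℕ) : ℝ) / ((3 * M + 181 : ℕ) : ℝ)) (by positivity) ?_).trans ?_
  · rw [Fintype.card_fin]
    exact hwin
  · push_cast
    rw [div_le_iff₀ (by positivity)]
    nlinarith
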